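/- arXiv:2308.04475 — 2 statements merged into one kernel-verified Lean document; each statement's English description precedes it below -/
import Mathlib

section
/- Let G be a finite simple graph with adjacency matrix A over the reals, and let Ā denote the adjacency matrix of the complement of G. Then the vector chromatic number χvec(G), defined as the supremum of ⟨J, Z⟩ over all entrywise nonnegative positive semidefinite real symmetric matrices Z with trace Z = 1 and Z_{uv} = 0 for all distinct non-adjacent u, v, equals the supremum of ⟨J, Z⟩ over all entrywise nonnegative positive semidefinite real symmetric matrices Z satisfying ⟨I + Ā, Z⟩ = 1. -/
open Matrix Finset BigOperators

/-- The Frobenius (trace) inner product of two real matrices. -/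
noncomputable def frob {n : ℕ} (M N : Matrix (Fin n) (Fin n) ℝ) : ℝ :=
  ∑ u, ∑ v, M u v * N u v

/-- The all-ones matrix. -/
noncomputable def matJ (n : ℕ) : Matrix (Fin n) (Fin n) ℝ :=
  Matrix.of fun _ _ => (1 : ℝ)

/-- The vector chromatic number of `G`: the supremum of `⟨J, Z⟩` over all real symmetric,
entrywise nonnegative, positive semidefinite matrices `Z` with trace `1` whose entries vanish
on distinct non-adjacent pairs of vertices. -/
noncomputable def chiVec {n : ℕ} (G : SimpleGraph (Fin n)) [DecidableRel G.Adj] : ℝ :=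
  sSup { x : ℝ | ∃ Z : Matrix (Fin n) (Fin n) ℝ,
    Z.IsSymm ∧ (∀ u v, 0 ≤ Z u v) ∧ Z.PosSemidef ∧ Z.trace = 1 ∧
    (∀ u v, u ≠ v → ¬ G.Adj u v → Z u v = 0) ∧ x = frob (matJ n) Z }

/-- The adjacency matrix of a graph is hermitian (it is real symmetric). -/
theorem adjHerm {n : ℕ} (G : SimpleGraph (Fin n)) [DecidableRel G.Adj] :
    (G.adjMatrix ℝ).IsHermitian :=
  (Matrix.conjTranspose_eq_transpose_of_trivial _).trans G.isSymm_adjMatrix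

/-- `s⁺`: the sum of the squares of the positive eigenvalues of the adjacency matrix,
counted with multiplicity. -/
noncomputable def sPlus {n : ℕ} (G : SimpleGraph (Fin n)) [DecidableRel G.Adj] : ℝ :=
  ∑ i, if 0 < (adjHerm G).eigenvalues i then ((adjHerm G).eigenvalues i) ^ 2 else 0

/-- `s⁻`: the sum of the squares of the negative eigenvalues of the adjacency matrix,
counted with multiplicity. -/
noncomputable def sMinus {n : ℕ} (G : SimpleGraph (Fin n)) [DecidableRel G.Adj] : ℝ :=
  ∑ i, if (adjHerm G).eigenvalues i < 0 then ((adjHerm G).eigenvalues i) ^ 2 else 0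

/-- `A⁺ = Σ_{θ>0} θ E_θ`: the positive part of the adjacency matrix, obtained from its
spectral decomposition. -/
noncomputable def Aplus {n : ℕ} (G : SimpleGraph (Fin n)) [DecidableRel G.Adj] :
    Matrix (Fin n) (Fin n) ℝ :=
  ((adjHerm G).eigenvectorUnitary : Matrix (Fin n) (Fin n) ℝ) *
    diagonal (fun i => if 0 < (adjHerm G).eigenvalues i then (adjHerm G).eigenvalues i else 0) *
    star ((adjHerm G).eigenvectorUnitary : Matrix (Fin n) (Fin n) ℝ)

/-- `A⁻ = -Σ_{λ<0} λ E_λ`: the negative part of the adjacency matrix, obtained from its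
spectral decomposition. -/
noncomputable def Aminus {n : ℕ} (G : SimpleGraph (Fin n)) [DecidableRel G.Adj] :
    Matrix (Fin n) (Fin n) ℝ :=
  ((adjHerm G).eigenvectorUnitary : Matrix (Fin n) (Fin n) ℝ) *
    diagonal (fun i => if (adjHerm G).eigenvalues i < 0 then -(adjHerm G).eigenvalues i else 0) *
    star ((adjHerm G).eigenvectorUnitary : Matrix (Fin n) (Fin n) ℝ)

/-!
Let `W` be the part of `Z` supported on the non-edges of `G`. Adding the weighted Laplacian of `W`
to `Z` erases the entries on the non-edges and moves their weight to the diagonal. Since Laplacians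
of nonnegative weights are positive semidefinite and have zero total sum, this preserves positive
semidefiniteness and `⟨J, Z⟩`, while the trace increases by exactly `⟨Ā, Z⟩`. So both suprema are
taken over the same set of values.
-/

section WeightedLaplacian

variable {V R : Type*} [Fintype V] [DecidableEq V]

/-- The Laplacian of the weighted graph with symmetric weight matrix `W`: row sums on the diagonal,
minus the weights. It is the correction that moves off-diagonal weight to the diagonal; loops,
that is diagonal entries of `W`, cancel. -/
def weightedLaplacian [AddCommGroup R] (W : Matrix V V R) : Matrix V V R :=
  diagonal (fun u ↦ ∑ v, W u v) - W

section AddCommGroup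

variable [AddCommGroup R]

theorem weightedLaplacian_zero : weightedLaplacian (0 : Matrix V V R) = 0 := by
  simp [weightedLaplacian]

theorem weightedLaplacian_apply_of_ne (W : Matrix V V R) {u v : V} (h : u ≠ v) :
    weightedLaplacian W u v = -W u v := by
  simp [weightedLaplacian, h]

theorem isSymm_weightedLaplacian {W : Matrix V V R} (hW : W.IsSymm) :
    (weightedLaplacian W).IsSymm :=
  (isSymm_diagonal _).sub hW

theorem sum_sum_weightedLaplacian (W : Matrix V V R) :
    ∑ u, ∑ v, weightedLaplacian W u v = 0 := by
  simp [weightedLaplacian, diagonal_apply]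

end AddCommGroup

theorem dotProduct_weightedLaplacian_mulVec [CommRing R] (W : Matrix V V R) (x : V → R) :
    x ⬝ᵥ weightedLaplacian W *ᵥ x = ∑ u, ∑ v, W u v * (x u ^ 2 - x u * x v) := by
  rw [weightedLaplacian, sub_mulVec, dotProduct_sub]
  simp only [dotProduct, mulVec_diagonal]
  simp only [mulVec, dotProduct, sum_mul, mul_sum, ← sum_sub_distrib]
  exact sum_congr rfl fun u _ ↦ sum_congr rfl fun v _ ↦ by ring

theorem two_mul_dotProduct_weightedLaplacian_mulVec [CommRing R] {W : Matrix V V R}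
    (hW : W.IsSymm) (x : V → R) :
    2 * (x ⬝ᵥ weightedLaplacian W *ᵥ x) = ∑ u, ∑ v, W u v * (x u - x v) ^ 2 := by
  have hswap : x ⬝ᵥ weightedLaplacian W *ᵥ x = ∑ u, ∑ v, W u v * (x v ^ 2 - x v * x u) := by
    rw [dotProduct_weightedLaplacian_mulVec, sum_comm]
    simp only [hW.apply]
  rw [two_mul]
  nth_rw 2 [hswap]
  simp only [dotProduct_weightedLaplacian_mulVec, ← sum_add_distrib]
  exact sum_congr rfl fun u _ ↦ sum_congr rfl fun v _ ↦ by ring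

theorem posSemidef_weightedLaplacian [CommRing R] [LinearOrder R] [IsStrictOrderedRing R]
    [StarRing R] [TrivialStar R] {W : Matrix V V R} (hW : W.IsSymm) (hW₀ : ∀ u v, 0 ≤ W u v) :
    (weightedLaplacian W).PosSemidef := by
  refine .of_dotProduct_mulVec_nonneg
    (isHermitian_iff_isSymm.mpr (isSymm_weightedLaplacian hW)) fun x ↦ ?_
  have hform : 0 ≤ 2 * (x ⬝ᵥ weightedLaplacian W *ᵥ x) := by
    rw [two_mul_dotProduct_weightedLaplacian_mulVec hW]
    exact sum_nonneg fun u _ ↦ sum_nonneg fun v _ ↦ mul_nonneg (hW₀ u v) (sq_nonneg _)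
  rw [star_trivial]
  exact nonneg_of_mul_nonneg_right hform two_pos

end WeightedLaplacian

section AdjMatrixHadamard

variable {V R : Type*} [MulZeroOneClass R] (H : SimpleGraph V) [DecidableRel H.Adj]
  {Z : Matrix V V R}

theorem adjMatrix_hadamard_eq_zero (hZ : ∀ u v, H.Adj u v → Z u v = 0) :
    H.adjMatrix R ⊙ Z = 0 := by
  ext u v
  simpa using hZ u v

theorem isSymm_adjMatrix_hadamard (hZ : Z.IsSymm) : (H.adjMatrix R ⊙ Z).IsSymm := by
  rw [IsSymm, transpose_hadamard, H.isSymm_adjMatrix, hZ]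

theorem adjMatrix_hadamard_nonneg [Preorder R] (hZ : ∀ u v, 0 ≤ Z u v) (u v : V) :
    0 ≤ (H.adjMatrix R ⊙ Z) u v := by
  by_cases h : H.Adj u v <;> simp [h, hZ u v]

end AdjMatrixHadamard

section EdgesToDiagonal

variable {V R : Type*} [Fintype V] [DecidableEq V]

/-- The matrix obtained from `Z` by erasing the entries on the edges of `H` and adding the sum of
the entries erased from each row to the diagonal entry of that row. For `H = Gᶜ` it turns a matrix
feasible for the relaxed program into one feasible for `chiVec G`. -/
def edgesToDiagonal [NonAssocRing R] (H : SimpleGraph V) [DecidableRel H.Adj] (Z : Matrix V V R) :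
    Matrix V V R :=
  Z + weightedLaplacian (H.adjMatrix R ⊙ Z)

section NonAssocRing

variable [NonAssocRing R] (H : SimpleGraph V) [DecidableRel H.Adj] (Z : Matrix V V R)

theorem edgesToDiagonal_apply_self (u : V) :
    edgesToDiagonal H Z u u = Z u u + ∑ v, (H.adjMatrix R ⊙ Z) u v := by
  simp [edgesToDiagonal, weightedLaplacian]

theorem edgesToDiagonal_apply_of_ne {u v : V} (h : u ≠ v) :
    edgesToDiagonal H Z u v = if H.Adj u v then 0 else Z u v := by
  by_cases hadj : H.Adj u v <;>
    simp [edgesToDiagonal, weightedLaplacian_apply_of_ne, h, hadj]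

theorem edgesToDiagonal_apply_of_adj {u v : V} (h : H.Adj u v) : edgesToDiagonal H Z u v = 0 := by
  rw [edgesToDiagonal_apply_of_ne H Z h.ne, if_pos h]

variable {Z} in
theorem edgesToDiagonal_eq_self (hZ : ∀ u v, H.Adj u v → Z u v = 0) : edgesToDiagonal H Z = Z := by
  rw [edgesToDiagonal, adjMatrix_hadamard_eq_zero H hZ, weightedLaplacian_zero, add_zero]

variable {Z} in
theorem isSymm_edgesToDiagonal (hZ : Z.IsSymm) : (edgesToDiagonal H Z).IsSymm :=
  hZ.add (isSymm_weightedLaplacian (isSymm_adjMatrix_hadamard H hZ))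

theorem trace_edgesToDiagonal :
    (edgesToDiagonal H Z).trace = Z.trace + ∑ u, ∑ v, (H.adjMatrix R ⊙ Z) u v := by
  simp only [trace, diag_apply, edgesToDiagonal_apply_self, sum_add_distrib]

theorem sum_sum_edgesToDiagonal :
    ∑ u, ∑ v, edgesToDiagonal H Z u v = ∑ u, ∑ v, Z u v := by
  simp only [edgesToDiagonal, Matrix.add_apply, sum_add_distrib, sum_sum_weightedLaplacian,
    add_zero]

end NonAssocRing

theorem edgesToDiagonal_nonneg [NonAssocRing R] [PartialOrder R] [IsOrderedAddMonoid R]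
    (H : SimpleGraph V) [DecidableRel H.Adj] {Z : Matrix V V R} (hZ : ∀ u v, 0 ≤ Z u v) (u v : V) :
    0 ≤ edgesToDiagonal H Z u v := by
  obtain rfl | hne := eq_or_ne u v
  · rw [edgesToDiagonal_apply_self]
    exact add_nonneg (hZ u u) (sum_nonneg fun v _ ↦ adjMatrix_hadamard_nonneg H hZ u v)
  · rw [edgesToDiagonal_apply_of_ne H Z hne]
    split_ifs
    exacts [le_rfl, hZ u v]

theorem posSemidef_edgesToDiagonal [CommRing R] [LinearOrder R] [IsStrictOrderedRing R]
    [StarRing R] [TrivialStar R] (H : SimpleGraph V) [DecidableRel H.Adj] {Z : Matrix V V R}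
    (hZ : Z.PosSemidef) (hZ₀ : ∀ u v, 0 ≤ Z u v) : (edgesToDiagonal H Z).PosSemidef :=
  have hsymm : Z.IsSymm := isHermitian_iff_isSymm.mp hZ.isHermitian
  hZ.add (posSemidef_weightedLaplacian (isSymm_adjMatrix_hadamard H hsymm)
    (adjMatrix_hadamard_nonneg H hZ₀))

end EdgesToDiagonal

section Frob

variable {n : ℕ} (H : SimpleGraph (Fin n)) [DecidableRel H.Adj] (Z : Matrix (Fin n) (Fin n) ℝ)

theorem frob_one_add_adjMatrix_eq_trace :
    frob (1 + H.adjMatrix ℝ) Z = (edgesToDiagonal H Z).trace := by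
  rw [trace_edgesToDiagonal]
  simp [frob, add_mul, sum_add_distrib, one_apply, trace]

theorem frob_matJ_edgesToDiagonal : frob (matJ n) (edgesToDiagonal H Z) = frob (matJ n) Z := by
  simp only [frob, matJ, of_apply, one_mul, sum_sum_edgesToDiagonal]

end Frob

/-- The vector chromatic number equals the supremum of `⟨J, Z⟩` over all entrywise nonnegative
positive semidefinite real symmetric matrices `Z` satisfying `⟨I + Ā, Z⟩ = 1`, where `Ā` is the
adjacency matrix of the complement of `G`. -/
theorem chiVec_eq_sSup_alt {n : ℕ} (G : SimpleGraph (Fin n)) [DecidableRel G.Adj] :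
    chiVec G = sSup { x : ℝ | ∃ Z : Matrix (Fin n) (Fin n) ℝ,
      Z.IsSymm ∧ (∀ u v, 0 ≤ Z u v) ∧ Z.PosSemidef ∧
      frob (1 + Gᶜ.adjMatrix ℝ) Z = 1 ∧ x = frob (matJ n) Z } := by
  unfold chiVec
  congr 1
  ext x
  constructor
  · rintro ⟨Z, hsymm, hnonneg, hpsd, htrace, hvanish, rfl⟩
    refine ⟨Z, hsymm, hnonneg, hpsd, ?_, rfl⟩
    have hfix : edgesToDiagonal Gᶜ Z = Z :=
      edgesToDiagonal_eq_self Gᶜ fun u v h ↦ hvanish u v h.ne ((G.compl_adj u v).mp h).2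
    rw [frob_one_add_adjMatrix_eq_trace, hfix, htrace]
  · rintro ⟨Z, hsymm, hnonneg, hpsd, hfrob, rfl⟩
    refine ⟨edgesToDiagonal Gᶜ Z, isSymm_edgesToDiagonal Gᶜ hsymm,
      edgesToDiagonal_nonneg Gᶜ hnonneg, posSemidef_edgesToDiagonal Gᶜ hpsd hnonneg, ?_, ?_,
      (frob_matJ_edgesToDiagonal Gᶜ Z).symm⟩
    · rw [← frob_one_add_adjMatrix_eq_trace, hfrob]
    · exact fun u v hne hadj ↦
        edgesToDiagonal_apply_of_adj Gᶜ Z ((G.compl_adj u v).mpr ⟨hne, hadj⟩)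
end

section
/- Let G be a finite simple graph with adjacency matrix A over the reals, let A⁺ denote the positive part of A obtained from its spectral decomposition, and let χvec(G) be the vector chromatic number of G. Then ‖A⁺‖² ≤ χvec(G) · Σ_{(u,v) not an edge} (A⁺)_{uv}², where the sum ranges over all ordered pairs (u,v) of vertices, including pairs with u = v, such that uv is not an edge of G. -/
open Matrix Finset BigOperators

/-!
Moving every entry of an entrywise nonnegative symmetric matrix `Q` at a non-edge of `G` onto the
diagonal of its row amounts to adding the Laplacian of the non-edge part of `Q`, viewed as edge
weights. That Laplacian is positive semidefinite and its entries sum to zero. So if `Q` is positive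
semidefinite, the resulting matrix is, up to scaling, feasible for `chiVec G`; its entries still sum
to `∑ Q`, and its trace is the sum of `Q` over the non-edges. By the Schur product theorem this
applies to `Q = P ⊙ P` for every positive semidefinite `P`, and `P = A⁺` is the theorem.
-/

section WeightedLaplacian

variable {V R : Type*} [Fintype V] [DecidableEq V]

/-- The Laplacian `D - W` of a weighted graph with weight matrix `W`, where `D` is the diagonal
matrix of the row sums of `W`. Loops are allowed: the diagonal of `W` cancels. -/
def weightedLapMatrix [AddCommGroup R] (W : Matrix V V R) : Matrix V V R :=
  diagonal (fun u => ∑ v, W u v) - W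

theorem sum_weightedLapMatrix [AddCommGroup R] (W : Matrix V V R) :
    ∑ u, ∑ v, weightedLapMatrix W u v = 0 := by
  simp [weightedLapMatrix, diagonal_apply]

variable [CommRing R]

theorem dotProduct_weightedLapMatrix_mulVec (W : Matrix V V R) (x : V → R) :
    x ⬝ᵥ weightedLapMatrix W *ᵥ x = ∑ u, ∑ v, W u v * (x u * (x u - x v)) := by
  simp only [weightedLapMatrix, sub_mulVec, dotProduct, Pi.sub_apply, mulVec_diagonal]
  simp only [mulVec, dotProduct, Finset.sum_mul, ← Finset.sum_sub_distrib, Finset.mul_sum]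
  exact Finset.sum_congr rfl fun u _ => Finset.sum_congr rfl fun v _ => by ring

theorem two_mul_dotProduct_weightedLapMatrix_mulVec {W : Matrix V V R} (hW : W.IsSymm)
    (x : V → R) :
    2 * (x ⬝ᵥ weightedLapMatrix W *ᵥ x) = ∑ u, ∑ v, W u v * (x u - x v) ^ 2 := by
  have swapped : x ⬝ᵥ weightedLapMatrix W *ᵥ x = ∑ u, ∑ v, W u v * (x v * (x v - x u)) := by
    rw [dotProduct_weightedLapMatrix_mulVec, Finset.sum_comm]
    simp only [hW.apply]
  rw [two_mul]
  nth_rw 1 [dotProduct_weightedLapMatrix_mulVec]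
  rw [swapped]
  simp only [← Finset.sum_add_distrib]
  exact Finset.sum_congr rfl fun u _ => Finset.sum_congr rfl fun v _ => by ring

theorem posSemidef_weightedLapMatrix [LinearOrder R] [IsStrictOrderedRing R] [StarRing R]
    [TrivialStar R] {W : Matrix V V R} (hW : W.IsSymm) (hnonneg : ∀ u v, 0 ≤ W u v) :
    (weightedLapMatrix W).PosSemidef := by
  refine .of_dotProduct_mulVec_nonneg ?_ fun x => ?_
  · rw [IsHermitian, conjTranspose_eq_transpose_of_trivial]
    exact (isSymm_diagonal _).sub hW
  · rw [star_trivial]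
    refine nonneg_of_mul_nonneg_right (a := 2) ?_ two_pos
    rw [two_mul_dotProduct_weightedLapMatrix_mulVec hW]
    exact Finset.sum_nonneg fun u _ => Finset.sum_nonneg fun v _ =>
      mul_nonneg (hnonneg u v) (sq_nonneg _)

end WeightedLaplacian

section FoldNonedges

variable {V R : Type*} (G : SimpleGraph V) [DecidableRel G.Adj]

/-- The part of `Q` supported on the pairs that are not edges of `G`, the diagonal included. -/
def nonedgePart [Zero R] (Q : Matrix V V R) : Matrix V V R :=
  of fun u v => if ¬ G.Adj u v then Q u v else 0

theorem isSymm_nonedgePart [Zero R] {Q : Matrix V V R} (hQ : Q.IsSymm) :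
    (nonedgePart G Q).IsSymm :=
  IsSymm.ext fun u v => by simp only [nonedgePart, of_apply, G.adj_comm, hQ.apply]

theorem nonedgePart_nonneg [Zero R] [Preorder R] {Q : Matrix V V R} (hQ : ∀ u v, 0 ≤ Q u v)
    (u v : V) : 0 ≤ nonedgePart G Q u v :=
  ite_nonneg (hQ u v) le_rfl

variable [Fintype V] [DecidableEq V]

section AddCommGroup

variable [AddCommGroup R]

/-- The matrix obtained from `Q` by moving each entry at a non-edge of `G` onto the diagonal entry
of its row. It is written through the weighted Laplacian so that positive semidefiniteness is
inherited from `Q`. -/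
def foldNonedges (Q : Matrix V V R) : Matrix V V R :=
  Q + weightedLapMatrix (nonedgePart G Q)

theorem foldNonedges_apply_self (Q : Matrix V V R) (u : V) :
    foldNonedges G Q u u = ∑ v, nonedgePart G Q u v := by
  simp [foldNonedges, weightedLapMatrix, nonedgePart]

theorem foldNonedges_apply_of_ne (Q : Matrix V V R) {u v : V} (huv : u ≠ v) :
    foldNonedges G Q u v = if G.Adj u v then Q u v else 0 := by
  by_cases hadj : G.Adj u v <;>
    simp [foldNonedges, weightedLapMatrix, nonedgePart, huv, hadj]

theorem trace_foldNonedges (Q : Matrix V V R) :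
    (foldNonedges G Q).trace = ∑ u, ∑ v, nonedgePart G Q u v :=
  Finset.sum_congr rfl fun u _ => foldNonedges_apply_self G Q u

theorem sum_foldNonedges (Q : Matrix V V R) :
    ∑ u, ∑ v, foldNonedges G Q u v = ∑ u, ∑ v, Q u v := by
  simp only [foldNonedges, Matrix.add_apply, Finset.sum_add_distrib, sum_weightedLapMatrix,
    add_zero]

theorem foldNonedges_nonneg [PartialOrder R] [IsOrderedAddMonoid R] {Q : Matrix V V R}
    (hQ : ∀ u v, 0 ≤ Q u v) (u v : V) : 0 ≤ foldNonedges G Q u v := by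
  rcases eq_or_ne u v with rfl | huv
  · rw [foldNonedges_apply_self]
    exact Finset.sum_nonneg fun v _ => nonedgePart_nonneg G hQ u v
  · rw [foldNonedges_apply_of_ne G Q huv]
    exact ite_nonneg (hQ u v) le_rfl

end AddCommGroup

theorem posSemidef_foldNonedges [CommRing R] [LinearOrder R] [IsStrictOrderedRing R] [StarRing R]
    [TrivialStar R] {Q : Matrix V V R} (hQ : Q.PosSemidef) (hnonneg : ∀ u v, 0 ≤ Q u v) :
    (foldNonedges G Q).PosSemidef :=
  hQ.add <| posSemidef_weightedLapMatrix
    (isSymm_nonedgePart G (isHermitian_iff_isSymm.mp hQ.isHermitian)) (nonedgePart_nonneg G hnonneg)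

end FoldNonedges

section EntrySum

variable {V R : Type*} [CommRing R] [LinearOrder R] [IsStrictOrderedRing R] [StarRing R]
  [TrivialStar R] {Z : Matrix V V R}

theorem two_mul_apply_le_diag_add_diag (hZ : Z.PosSemidef) (u v : V) :
    2 * Z u v ≤ Z u u + Z v v := by
  have hsymm : Z v u = Z u v := by simpa using hZ.isHermitian.apply u v
  have hform : 0 ≤ Z u u - Z u v - (Z v u - Z v v) := by
    simpa [dotProduct, mulVec, Fin.sum_univ_two, sub_eq_add_neg]
      using (hZ.submatrix ![u, v]).dotProduct_mulVec_nonneg ![1, -1]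
  linarith

theorem sum_le_card_mul_trace [Fintype V] (hZ : Z.PosSemidef) :
    ∑ u, ∑ v, Z u v ≤ Fintype.card V * Z.trace := by
  refine le_of_mul_le_mul_left ?_ (two_pos (α := R))
  calc 2 * ∑ u, ∑ v, Z u v = ∑ u, ∑ v, 2 * Z u v := by simp only [Finset.mul_sum]
    _ ≤ ∑ u, ∑ v, (Z u u + Z v v) :=
      Finset.sum_le_sum fun u _ => Finset.sum_le_sum fun v _ =>
        two_mul_apply_le_diag_add_diag hZ u v
    _ = 2 * (Fintype.card V * Z.trace) := by
      simp only [Finset.sum_add_distrib, Finset.sum_const, Finset.card_univ, nsmul_eq_mul,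
        ← Finset.mul_sum, trace, diag_apply]
      ring

end EntrySum

section ChiVec

variable {n : ℕ} (G : SimpleGraph (Fin n)) [DecidableRel G.Adj]

theorem frob_matJ (Z : Matrix (Fin n) (Fin n) ℝ) : frob (matJ n) Z = ∑ u, ∑ v, Z u v := by
  simp [frob, matJ]

theorem sum_le_chiVec {Z : Matrix (Fin n) (Fin n) ℝ} (hZ : Z.PosSemidef)
    (hnonneg : ∀ u v, 0 ≤ Z u v) (htrace : Z.trace = 1)
    (hsupp : ∀ u v, u ≠ v → ¬ G.Adj u v → Z u v = 0) : ∑ u, ∑ v, Z u v ≤ chiVec G := by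
  refine le_csSup ⟨n, ?_⟩ ⟨Z, isHermitian_iff_isSymm.mp hZ.isHermitian, hnonneg, hZ, htrace,
    hsupp, (frob_matJ Z).symm⟩
  rintro _ ⟨Y, -, -, hY, hYtrace, -, rfl⟩
  simpa [frob_matJ, hYtrace] using sum_le_card_mul_trace hY

theorem sum_le_chiVec_mul_trace {Z : Matrix (Fin n) (Fin n) ℝ} (hZ : Z.PosSemidef)
    (hnonneg : ∀ u v, 0 ≤ Z u v) (hsupp : ∀ u v, u ≠ v → ¬ G.Adj u v → Z u v = 0) :
    ∑ u, ∑ v, Z u v ≤ chiVec G * Z.trace := by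
  rcases hZ.trace_nonneg.eq_or_lt with htrace | htrace
  · simp [hZ.trace_eq_zero_iff.mp htrace.symm]
  · have hinv : 0 ≤ Z.trace⁻¹ := inv_nonneg.mpr htrace.le
    have hscaled : ∑ u, ∑ v, (Z.trace⁻¹ • Z) u v ≤ chiVec G :=
      sum_le_chiVec G (hZ.smul hinv) (fun u v => mul_nonneg hinv (hnonneg u v))
        (by rw [trace_smul, smul_eq_mul, inv_mul_cancel₀ htrace.ne'])
        (fun u v huv hadj => by rw [Matrix.smul_apply, hsupp u v huv hadj, smul_zero])
    rw [← div_le_iff₀ htrace, div_eq_inv_mul]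
    simpa only [Matrix.smul_apply, smul_eq_mul, ← Finset.mul_sum] using hscaled

theorem sum_le_chiVec_mul_nonedge_sum {Q : Matrix (Fin n) (Fin n) ℝ} (hQ : Q.PosSemidef)
    (hnonneg : ∀ u v, 0 ≤ Q u v) :
    ∑ u, ∑ v, Q u v ≤ chiVec G * ∑ u, ∑ v, if ¬ G.Adj u v then Q u v else 0 := by
  calc ∑ u, ∑ v, Q u v = ∑ u, ∑ v, foldNonedges G Q u v := (sum_foldNonedges G Q).symm
    _ ≤ chiVec G * (foldNonedges G Q).trace :=
      sum_le_chiVec_mul_trace G (posSemidef_foldNonedges G hQ hnonneg)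
        (foldNonedges_nonneg G hnonneg)
        fun u v huv hadj => by rw [foldNonedges_apply_of_ne G Q huv, if_neg hadj]
    _ = chiVec G * ∑ u, ∑ v, if ¬ G.Adj u v then Q u v else 0 := by
      rw [trace_foldNonedges]
      rfl

theorem posSemidef_Aplus : (Aplus G).PosSemidef := by
  refine (PosSemidef.diagonal fun i => ?_).mul_mul_conjTranspose_same _
  dsimp only [Pi.zero_apply]
  split_ifs with hpos
  exacts [hpos.le, le_rfl]

theorem normSq_Aplus_le_chiVec_mul_nonedge_sum_general {P : Matrix (Fin n) (Fin n) ℝ}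
    (hP : P.PosSemidef) :
    ∑ u, ∑ v, (P u v) ^ 2 ≤
      chiVec G * ∑ u, ∑ v, if ¬ G.Adj u v then (P u v) ^ 2 else 0 := by
  simpa only [hadamard_apply, ← sq] using
    sum_le_chiVec_mul_nonedge_sum G (hP.hadamard hP) fun u v => mul_self_nonneg (P u v)

end ChiVec

/-- `‖A⁺‖² ≤ χvec(G) · Σ_{(u,v) not an edge} (A⁺)_{uv}²`, where the sum ranges over all ordered
pairs of vertices (including diagonal pairs) that are not edges of `G`. -/
theorem normSq_Aplus_le_chiVec_mul_nonedge_sum {n : ℕ} (G : SimpleGraph (Fin n))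
    [DecidableRel G.Adj] :
    ∑ u, ∑ v, (Aplus G u v) ^ 2 ≤
      chiVec G * ∑ u, ∑ v, if ¬ G.Adj u v then (Aplus G u v) ^ 2 else 0 :=
  normSq_Aplus_le_chiVec_mul_nonedge_sum_general G (posSemidef_Aplus G)
end
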